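/- Let α ∈ (1,∞), let β be its Hölder conjugate (1/α + 1/β = 1), and let φ : ℝ → [0,∞) be a measurable weight function for which all the integrals below are finite. Let G(x) = a_{α,1} exp(−|x|^α) with a_{α,1} = α/(2Γ(1/α)) be the generalized 1-Gaussian density, let W have the Gamma distribution with shape (α+1)/α and rate 1, and set Θ_α(W) = E[ φ(−W^{1/α}) + φ(W^{1/α}) ]. Then 2 · σ_{φ,α}(G) · [J^{w,φ}_{α,1}(G)]^{1/β} = Θ_α(W). -/

import Mathlib

/-!
With `S = ∫ φ |x|^α G`, both sides equal `2 α S`. The derivative of the density satisfies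
`|G' / G| = α |x|^(α-1)`, and `(α - 1) β = α`, so the Fisher information is `J = α^β S`; hence
`σ J^(1/β) = S^(1/α) α S^(1/β) = α S`. On the other side, the substitution `t = x^α` in the Gamma
expectation, with `Γ(1 + 1/α) = Γ(1/α) / α`, gives `Θ = (α² / Γ(1/α)) ∫_{x>0} (φ(-x) + φ(x)) x^α
exp(-x^α)`, and folding the line at the origin turns this into `2 α S`.
-/

open MeasureTheory Real

/-- Folding an integral over the line at the origin. -/
lemma integral_eq_integral_Ioi_fold (f : ℝ → ℝ) (hf : Integrable f) :
    ∫ x, f x = ∫ x in Set.Ioi (0 : ℝ), (f (-x) + f x) := by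
  rw [integral_add hf.comp_neg.integrableOn hf.integrableOn, integral_comp_neg_Ioi, neg_zero]
  exact (intervalIntegral.integral_Iic_add_Ioi hf.integrableOn hf.integrableOn).symm

/-- The score `G' / G` of the generalized Gaussian has absolute value `α |x|^(α-1)`. -/
lemma abs_score_generalized_gaussian {α a x g : ℝ} (hα : 1 < α) (ha : 0 < a) (hx : x ≠ 0)
    (hg : HasDerivAt (fun x => a * Real.exp (-|x| ^ α)) g x) :
    |(a * Real.exp (-|x| ^ α)) ^ (1 - 2 : ℝ) * g| = α * |x| ^ (α - 1) := by
  have h := ((hasDerivAt_abs_rpow x hα).fun_neg.exp).const_mul a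
  rw [hg.unique h]
  have hpos : 0 < a * Real.exp (-|x| ^ α) := by positivity
  have hx' : 0 < |x| := abs_pos.mpr hx
  rw [show (1 - 2 : ℝ) = -1 by norm_num, Real.rpow_neg_one]
  have : (a * Real.exp (-|x| ^ α))⁻¹ * (a * (Real.exp (-|x| ^ α) * -(α * |x| ^ (α - 2) * x)))
      = -(α * |x| ^ (α - 2) * x) := by
    field_simp
  rw [this, abs_neg, abs_mul, abs_mul, abs_of_pos (by linarith : 0 < α),
    abs_of_pos (Real.rpow_pos_of_pos hx' _), mul_assoc, ← Real.rpow_add_one hx'.ne']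
  congr 2
  ring

/-- For the generalized `1`-Gaussian `G(x) = a_{α,1} exp(-|x|^α)`,
`2 σ_{φ,α}(G) [J^{w,φ}_{α,1}(G)]^(1/β) = Θ_α(W)` with
`W ~ Gamma((α+1)/α, 1)` and `Θ_α(W) = E[φ(-W^(1/α)) + φ(W^(1/α))]`. -/
theorem generalized_one_gaussian_weighted_identity
    (α β : ℝ) (hα : 1 < α) (hβ : 1 / α + 1 / β = 1)
    (φ : ℝ → ℝ) (hφ_nonneg : ∀ x, 0 ≤ φ x) (hφ_meas : Measurable φ)
    (a : ℝ) (ha : a = α / (2 * Real.Gamma (1 / α)))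
    (G : ℝ → ℝ) (hG : G = fun x => a * Real.exp (-|x| ^ α))
    (G' : ℝ → ℝ) (hG' : ∀ᵐ x ∂volume, HasDerivAt G (G' x) x)
    (σG J Θ : ℝ)
    (hσ : σG = (∫ x, φ x * |x| ^ α * G x) ^ (1 / α))
    (hσ_int : Integrable (fun x => φ x * |x| ^ α * G x))
    (hJ : J = ∫ x, φ x * |G x ^ (1 - 2 : ℝ) * G' x| ^ β * G x)
    (hJ_int : Integrable (fun x => φ x * |G x ^ (1 - 2 : ℝ) * G' x| ^ β * G x))
    (hΘ : Θ = ∫ t in Set.Ioi (0 : ℝ),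
        (φ (-(t ^ (1 / α))) + φ (t ^ (1 / α))) *
          (t ^ ((α + 1) / α - 1) * Real.exp (-t) / Real.Gamma ((α + 1) / α)))
    (hΘ_int : IntegrableOn (fun t =>
        (φ (-(t ^ (1 / α))) + φ (t ^ (1 / α))) *
          (t ^ ((α + 1) / α - 1) * Real.exp (-t) / Real.Gamma ((α + 1) / α)))
        (Set.Ioi (0 : ℝ))) :
    2 * σG * J ^ (1 / β) = Θ := by
  have hα0 : 0 < α := by linarith
  have hβ0 : 0 < β := by
    have h1 : 1 / α < 1 := by rw [div_lt_one hα0]; exact hα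
    have h2 : 0 < 1 / β := by linarith
    exact one_div_pos.mp h2
  have hconj : (α - 1) * β = α := by
    field_simp at hβ
    linarith
  have hΓ : 0 < Real.Gamma (1 / α) := Real.Gamma_pos_of_pos (by positivity)
  have ha0 : 0 < a := by rw [ha]; positivity
  set S := ∫ x, φ x * |x| ^ α * G x with hS
  have hS0 : 0 ≤ S := by
    refine integral_nonneg fun x => ?_
    have := hφ_nonneg x
    simp only [hG]
    positivity
  have hJS : J = α ^ β * S := by
    rw [hJ, hS, ← integral_const_mul]
    refine integral_congr_ae ?_
    have hne : ∀ᵐ x : ℝ ∂volume, x ≠ 0 := by simp [ae_iff]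
    filter_upwards [hG', hne] with x hx hx0
    subst hG
    rw [abs_score_generalized_gaussian hα ha0 hx0 hx,
      Real.mul_rpow hα0.le (Real.rpow_nonneg (abs_nonneg x) _),
      ← Real.rpow_mul (abs_nonneg x), hconj]
    ring
  have hL : 2 * σG * J ^ (1 / β) = 2 * α * S := by
    rw [hσ, hJS, Real.mul_rpow (by positivity) hS0, ← Real.rpow_mul hα0.le,
      mul_one_div_cancel hβ0.ne', Real.rpow_one]
    have : S ^ (1 / α) * S ^ (1 / β) = S := by
      rw [← Real.rpow_add_of_nonneg hS0 (by positivity) (by positivity), hβ, Real.rpow_one]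
    calc 2 * S ^ (1 / α) * (α * S ^ (1 / β)) = 2 * α * (S ^ (1 / α) * S ^ (1 / β)) := by ring
      _ = _ := by rw [this]
  rw [← integral_comp_rpow_Ioi_of_pos hα0] at hΘ
  rw [hL, hΘ, hS, integral_eq_integral_Ioi_fold _ hσ_int, ← integral_const_mul]
  refine setIntegral_congr_fun measurableSet_Ioi fun x hx => ?_
  have hx0 : (0 : ℝ) < x := hx
  have hroot : (x ^ α) ^ (1 / α) = x := by
    rw [← Real.rpow_mul hx0.le, mul_one_div_cancel hα0.ne', Real.rpow_one]
  have hshape : (α + 1) / α = 1 / α + 1 := by field_simp; ring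
  have hpow : x ^ α = x ^ (α - 1) * x := by
    rw [← Real.rpow_add_one hx0.ne']; congr 1; ring
  simp only [hG, abs_neg, abs_of_pos hx0, smul_eq_mul, hshape, add_sub_cancel_right, hroot]
  rw [Real.Gamma_add_one (by positivity), ha]
  -- Only the outer factor `x ^ α` is split; the one inside the exponential stays an atom.
  generalize Real.exp (-x ^ α) = e
  rw [hpow]
  field_simp
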